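/- arXiv:2502.05875 — 3 statements merged into one kernel-verified Lean document; each statement's English description precedes it below -/
import Mathlib

section
/- If L is a complete lattice and y ∈ L is not widely generated, then y has no canonical join representation. Equivalently, every element of a complete lattice that has a canonical join representation is widely generated. -/
/-!
Let `U` be a canonical join representation of `y`. For `u ∈ U` let `m` be the join of all `x ≤ y`
with `u ≰ x`. Then `m < y`, for otherwise canonicity would put `u` below one of these `x`.
Irredundancy makes `U` an antichain, so `m` bounds `U \ {u}`, while any `c ≤ y` strictly above `m`
lies above `u`; such a `c` bounds all of `U` and equals `y`. Hence `m ⋖ y`. Finally, each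
`z < y` fails to bound some `u ∈ U`, and so lies below the corresponding lower cover `m`.
-/

/-- An element `x` of a poset is widely generated if every `y < x` lies below
some lower cover of `x`. -/
def WidelyGenerated {α : Type*} [PartialOrder α] (x : α) : Prop :=
  ∀ y : α, y < x → ∃ x' : α, x' ⋖ x ∧ y ≤ x'

/-- A canonical join representation of `x`: `⋁U = x`, no proper subset of `U`
has join `x` (irredundancy), and `U ≪ V` for every `V` with `⋁V = x`. -/
def IsCanonicalJoinRep {L : Type*} [CompleteLattice L] (U : Set L) (x : L) : Prop :=
  sSup U = x ∧ (∀ U' : Set L, U' ⊂ U → sSup U' ≠ x) ∧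
    ∀ V : Set L, sSup V = x → ∀ u ∈ U, ∃ v ∈ V, u ≤ v

/-- A complete lattice congruence: an equivalence relation such that whenever
`xᵢ ≡ yᵢ` for all `i`, also `⋁ᵢ xᵢ ≡ ⋁ᵢ yᵢ` and `⋀ᵢ xᵢ ≡ ⋀ᵢ yᵢ`
(families are encoded as sets of pairs). -/
def IsCompleteCongruence {L : Type*} [CompleteLattice L] (r : L → L → Prop) : Prop :=
  Equivalence r ∧
    ∀ P : Set (L × L), (∀ p ∈ P, r p.1 p.2) →
      r (sSup (Prod.fst '' P)) (sSup (Prod.snd '' P)) ∧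
      r (sInf (Prod.fst '' P)) (sInf (Prod.snd '' P))

/-- A relation has finitely many equivalence classes. -/
def HasFinitelyManyClasses {α : Type*} (r : α → α → Prop) : Prop :=
  (Set.range fun x : α => {y : α | r x y}).Finite

/-- A cofinite congruence: a complete lattice congruence with finitely many classes. -/
def IsCofiniteCongruence {L : Type*} [CompleteLattice L] (r : L → L → Prop) : Prop :=
  IsCompleteCongruence r ∧ HasFinitelyManyClasses r

/-- A profinite complete lattice: distinct elements are separated by some
cofinite congruence. -/
def IsProfinite (L : Type*) [CompleteLattice L] : Prop :=
  ∀ x y : L, x ≠ y → ∃ r : L → L → Prop, IsCofiniteCongruence r ∧ ¬ r x y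

/-- `x` is compact: whenever `x ≤ ⋁X`, already `x ≤ ⋁X'` for some finite `X' ⊆ X`. -/
def IsCompactElt {L : Type*} [CompleteLattice L] (x : L) : Prop :=
  ∀ X : Set L, x ≤ sSup X → ∃ X' ⊆ X, X'.Finite ∧ x ≤ sSup X'

/-- `x` is finitely generated: `x` is the minimum of its class for some
cofinite congruence, i.e. `x = π↓(x)`. -/
def FinitelyGeneratedElt {L : Type*} [CompleteLattice L] (x : L) : Prop :=
  ∃ r : L → L → Prop, IsCofiniteCongruence r ∧ ∀ y : L, r x y → x ≤ y

/-- `x` is a complete join-irreducible: no set avoiding `x` has join `x`. -/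
def CompleteJoinIrred {L : Type*} [CompleteLattice L] (x : L) : Prop :=
  ¬ ∃ X : Set L, x ∉ X ∧ sSup X = x

/-- Join semidistributivity: for finite nonempty `X`, if `x ∨ y = z` for all
`x ∈ X` then `(⋀X) ∨ y = z`. -/
def JoinSemidistrib (L : Type*) [CompleteLattice L] : Prop :=
  ∀ X : Set L, X.Finite → X.Nonempty → ∀ y z : L,
    (∀ x ∈ X, x ⊔ y = z) → sInf X ⊔ y = z

/-- Complete join semidistributivity: for any nonempty `X`, if `x ∨ y = z` for all
`x ∈ X` then `(⋀X) ∨ y = z`. -/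
def CompletelyJoinSemidistrib (L : Type*) [CompleteLattice L] : Prop :=
  ∀ X : Set L, X.Nonempty → ∀ y z : L,
    (∀ x ∈ X, x ⊔ y = z) → sInf X ⊔ y = z

/-- Join semidistributivity of the quotient lattice `L/≡`, expressed via
representatives: the join of classes `[x] ∨ [y]` is `[x ⊔ y]` and the (finite)
meet of classes `⋀[xᵢ]` is `[⋀ xᵢ]`. -/
def QuotientJoinSemidistrib {L : Type*} [CompleteLattice L] (r : L → L → Prop) : Prop :=
  ∀ X : Set L, X.Finite → X.Nonempty → ∀ y z : L,
    (∀ x ∈ X, r (x ⊔ y) z) → r (sInf X ⊔ y) z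

section CompleteSemilatticeSup

variable {L : Type*} [CompleteSemilatticeSup L] {U : Set L} {a u x y z : L}

theorem exists_mem_not_le_of_lt_sSup (hz : z < sSup U) : ∃ u ∈ U, ¬ u ≤ z := by
  simpa only [sSup_le_iff, not_forall, exists_prop] using hz.not_ge

theorem sSup_sdiff_singleton_of_le (ha : a ≤ sSup (U \ {a})) : sSup (U \ {a}) = sSup U := by
  refine le_antisymm (sSup_le_sSup Set.sdiff_subset) (sSup_le fun b hb => ?_)
  obtain rfl | hba := eq_or_ne b a
  · exact ha
  · exact le_sSup ⟨hb, hba⟩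

theorem isAntichain_of_forall_ssubset_sSup_ne (hU : ∀ U' ⊂ U, sSup U' ≠ sSup U) :
    IsAntichain (· ≤ ·) U := by
  intro a ha b hb hab hle
  have hproper : U \ {a} ⊂ U := Set.sdiff_singleton_ssubset.2 ha
  exact hU _ hproper (sSup_sdiff_singleton_of_le (hle.trans (le_sSup ⟨hb, hab.symm⟩)))

/-- The join of all elements below `y` that are not above `u`. When `u` is a canonical joinand
of `y`, this is the lower cover of `y` associated with `u`. -/
def sSupNotAbove (y u : L) : L :=
  sSup (Set.Iic y \ Set.Ici u)

theorem le_sSupNotAbove (hxy : x ≤ y) (hux : ¬ u ≤ x) : x ≤ sSupNotAbove y u :=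
  le_sSup ⟨hxy, hux⟩

theorem sSupNotAbove_le : sSupNotAbove y u ≤ y :=
  sSup_le fun _ hx => hx.1

end CompleteSemilatticeSup

namespace IsCanonicalJoinRep

variable {L : Type*} [CompleteLattice L] {U : Set L} {u y : L}

theorem isAntichain (hU : IsCanonicalJoinRep U y) : IsAntichain (· ≤ ·) U := by
  obtain ⟨rfl, hirredundant, -⟩ := hU
  exact isAntichain_of_forall_ssubset_sSup_ne hirredundant

theorem sSupNotAbove_lt (hU : IsCanonicalJoinRep U y) (hu : u ∈ U) : sSupNotAbove y u < y := by
  refine sSupNotAbove_le.lt_of_ne fun heq => ?_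
  obtain ⟨x, ⟨-, hux⟩, hle⟩ := hU.2.2 _ heq u hu
  exact hux hle

theorem le_sSupNotAbove_of_ne (hU : IsCanonicalJoinRep U y) (hu : u ∈ U) {a : L} (ha : a ∈ U)
    (hau : a ≠ u) : a ≤ sSupNotAbove y u :=
  le_sSupNotAbove (hU.1 ▸ le_sSup ha) (hU.isAntichain hu ha hau.symm)

theorem sSupNotAbove_covBy (hU : IsCanonicalJoinRep U y) (hu : u ∈ U) :
    sSupNotAbove y u ⋖ y := by
  refine ⟨hU.sSupNotAbove_lt hu, fun c hmc hcy => hcy.not_ge ?_⟩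
  have huc : u ≤ c := by
    by_contra huc
    exact hmc.not_ge (le_sSupNotAbove hcy.le huc)
  rw [← hU.1]
  refine sSup_le fun a ha => ?_
  obtain rfl | hau := eq_or_ne a u
  · exact huc
  · exact (hU.le_sSupNotAbove_of_ne hu ha hau).trans hmc.le

theorem widelyGenerated (hU : IsCanonicalJoinRep U y) : WidelyGenerated y := by
  intro z hz
  obtain ⟨u, hu, huz⟩ := exists_mem_not_le_of_lt_sSup (hz.trans_eq hU.1.symm)
  exact ⟨sSupNotAbove y u, hU.sSupNotAbove_covBy hu, le_sSupNotAbove hz.le huz⟩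

end IsCanonicalJoinRep

/-- In a complete lattice, an element which is not widely generated has
no canonical join representation. -/
theorem extended_weak_order_stmt4 {L : Type*} [CompleteLattice L] (y : L)
    (h : ¬ WidelyGenerated y) : ¬ ∃ U : Set L, IsCanonicalJoinRep U y := by
  rintro ⟨U, hU⟩
  exact h hU.widelyGenerated
end

section
/- Let L be a profinite complete lattice and x ∈ L. The following are equivalent: (i) x is compact; (ii) x is finitely generated; (iii) x is widely generated and x covers only finitely many elements of L; (iv) x is the join of a finite set of complete join-irreducibles of L. -/
/-- The minimum `π↓(x)` of the class of `x`, encoded as the infimum of the class, which belongs to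
the class when `r` is a complete congruence. Its fixed points, for cofinite `r`, are the finitely
generated elements. -/
def classMin {L : Type*} [InfSet L] (r : L → L → Prop) (x : L) : L :=
  sInf {y | r x y}

lemma HasFinitelyManyClasses.finite_range_classMin {L : Type*} [InfSet L]
    {r : L → L → Prop} (hr : HasFinitelyManyClasses r) :
    (Set.range (classMin r)).Finite := by
  have h := hr.image sInf
  rwa [← Set.range_comp] at h

section

variable {L : Type*} [CompleteLattice L] {r s : L → L → Prop} {a b c d x y : L}

namespace IsCompleteCongruence

lemma rel_iSup {ι : Sort*} {f g : ι → L} (hr : IsCompleteCongruence r)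
    (hfg : ∀ i, r (f i) (g i)) : r (⨆ i, f i) (⨆ i, g i) := by
  have hP := (hr.2 (Set.range fun i => (f i, g i)) (Set.forall_mem_range.2 hfg)).1
  rwa [← Set.range_comp, ← Set.range_comp] at hP

lemma rel_iInf {ι : Sort*} {f g : ι → L} (hr : IsCompleteCongruence r)
    (hfg : ∀ i, r (f i) (g i)) : r (⨅ i, f i) (⨅ i, g i) := by
  have hP := (hr.2 (Set.range fun i => (f i, g i)) (Set.forall_mem_range.2 hfg)).2
  rwa [← Set.range_comp, ← Set.range_comp] at hP

lemma rel_sup (hr : IsCompleteCongruence r) (hab : r a b) (hcd : r c d) :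
    r (a ⊔ c) (b ⊔ d) := by
  rw [sup_eq_iSup, sup_eq_iSup]
  exact hr.rel_iSup (Bool.forall_bool.2 ⟨hcd, hab⟩)

lemma rel_inf (hr : IsCompleteCongruence r) (hab : r a b) (hcd : r c d) :
    r (a ⊓ c) (b ⊓ d) := by
  rw [inf_eq_iInf, inf_eq_iInf]
  exact hr.rel_iInf (Bool.forall_bool.2 ⟨hcd, hab⟩)

lemma rel_classMin (hr : IsCompleteCongruence r) (x : L) : r x (classMin r x) := by
  have : Nonempty {y // r x y} := ⟨x, hr.1.refl x⟩
  have h : r (⨅ _ : {y // r x y}, x) (⨅ y : {y | r x y}, ↑y) := hr.rel_iInf Subtype.prop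
  rwa [iInf_const, ← sInf_eq_iInf' {y | r x y}] at h

lemma classMin_le (hr : IsCompleteCongruence r) (x : L) : classMin r x ≤ x :=
  sInf_le (hr.1.refl x)

lemma classMin_le_of_le_of_rel (hr : IsCompleteCongruence r) (hxa : x ≤ a) (hab : r a b) :
    classMin r x ≤ b := by
  have hx : r x (x ⊓ b) := by simpa only [inf_of_le_left hxa] using hr.rel_inf (hr.1.refl x) hab
  exact (sInf_le hx).trans inf_le_right

lemma classMin_classMin (hr : IsCompleteCongruence r) (x : L) :
    classMin r (classMin r x) = classMin r x :=
  (hr.classMin_le _).antisymm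
    (hr.classMin_le_of_le_of_rel le_rfl (hr.1.trans (hr.rel_classMin x) (hr.rel_classMin _)))

lemma rel_of_classMin_eq (hr : IsCompleteCongruence r) (h : classMin r a = classMin r b) :
    r a b :=
  hr.1.trans (h ▸ hr.rel_classMin a) (hr.1.symm (hr.rel_classMin b))

lemma classMin_le_sSup_image_classMin (hr : IsCompleteCongruence r) {X : Set L}
    (hx : x ≤ sSup X) : classMin r x ≤ sSup (classMin r '' X) := by
  refine hr.classMin_le_of_le_of_rel hx ?_
  rw [sSup_eq_iSup', sSup_image']
  exact hr.rel_iSup fun u => hr.rel_classMin u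

lemma injOn_classMin_lowerCovers (hr : IsCompleteCongruence r) (hx : classMin r x = x) :
    Set.InjOn (classMin r) {y | y ⋖ x} := by
  intro a (ha : a ⋖ x) b (hb : b ⋖ x) hab
  by_contra hne
  have hxa : r x a := by
    simpa only [sup_idem, hb.wcovBy.sup_eq ha.wcovBy (Ne.symm hne)] using
      hr.rel_sup (hr.1.symm (hr.rel_of_classMin_eq hab)) (hr.1.refl a)
  exact ha.lt.not_ge (hx ▸ hr.classMin_le_of_le_of_rel le_rfl hxa)

end IsCompleteCongruence

lemma isCofiniteCongruence_true : IsCofiniteCongruence fun _ _ : L => True :=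
  ⟨⟨⟨fun _ => trivial, fun _ => trivial, fun _ _ => trivial⟩, fun _ _ => ⟨trivial, trivial⟩⟩,
    Set.finite_range_const⟩

lemma IsCofiniteCongruence.and (hr : IsCofiniteCongruence r) (hs : IsCofiniteCongruence s) :
    IsCofiniteCongruence fun x y => r x y ∧ s x y := by
  obtain ⟨⟨hre, hrP⟩, hrfin⟩ := hr
  obtain ⟨⟨hse, hsP⟩, hsfin⟩ := hs
  refine ⟨⟨⟨fun x => ⟨hre.refl x, hse.refl x⟩, .imp hre.symm hse.symm,
    fun h k => ⟨hre.trans h.1 k.1, hse.trans h.2 k.2⟩⟩, fun P hP => ?_⟩, ?_⟩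
  · obtain ⟨hrSup, hrInf⟩ := hrP P fun p hp => (hP p hp).1
    obtain ⟨hsSup, hsInf⟩ := hsP P fun p hp => (hP p hp).2
    exact ⟨⟨hrSup, hsSup⟩, ⟨hrInf, hsInf⟩⟩
  · refine (hrfin.image2 (· ∩ ·) hsfin).subset (Set.range_subset_iff.2 fun x => ?_)
    exact Set.mem_image2_of_mem (Set.mem_range_self x) (Set.mem_range_self x)

lemma completeJoinIrred_iff_sSup_Iio_lt : CompleteJoinIrred x ↔ sSup (Set.Iio x) < x := by
  have hle : sSup (Set.Iio x) ≤ x := sSup_le fun _ => le_of_lt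
  rw [hle.lt_iff_ne, CompleteJoinIrred, not_iff_not]
  refine ⟨?_, fun h => ⟨Set.Iio x, lt_irrefl x, h⟩⟩
  rintro ⟨X, hxX, hX⟩
  refine hle.antisymm (hX.ge.trans (sSup_le_sSup fun u hu => ?_))
  exact (hX ▸ le_sSup hu).lt_of_ne fun h => hxX (h ▸ hu)

lemma IsCofiniteCongruence.le_of_forall_completeJoinIrred_le (hr : IsCofiniteCongruence r)
    (hx : classMin r x = x)
    (h : ∀ j, classMin r j = j → CompleteJoinIrred j → j ≤ x → j ≤ y) : x ≤ y := by
  have hwf : (Set.range (classMin r)).WellFoundedOn (· < ·) :=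
    hr.2.finite_range_classMin.wellFoundedOn
  suffices ∀ z ∈ Set.range (classMin r), z ≤ x → z ≤ y from this x ⟨x, hx⟩ le_rfl
  intro z hz
  refine hwf.induction (P := fun z => z ≤ x → z ≤ y) hz fun z hz ih hzx => ?_
  have hzmin : classMin r z = z := by
    obtain ⟨u, rfl⟩ := hz
    exact hr.1.classMin_classMin u
  by_cases hirr : CompleteJoinIrred z
  · exact h z hzmin hirr hzx
  have hzsup : sSup (Set.Iio z) = z :=
    (sSup_le fun _ => le_of_lt).eq_of_not_lt (mt completeJoinIrred_iff_sSup_Iio_lt.2 hirr)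
  calc z = classMin r z := hzmin.symm
    _ ≤ sSup (classMin r '' Set.Iio z) := hr.1.classMin_le_sSup_image_classMin hzsup.ge
    _ ≤ y := by
      refine sSup_le (Set.forall_mem_image.2 fun u huz => ?_)
      have hlt : classMin r u < z := (hr.1.classMin_le u).trans_lt huz
      exact ih _ (Set.mem_range_self u) hlt (hlt.le.trans hzx)

lemma IsCompactElt.isCompactElement (hx : IsCompactElt x) : IsCompactElement x := by
  refine (CompleteLattice.isCompactElement_iff_exists_le_sSup_of_le_sSup _ x).2 fun X hX => ?_
  obtain ⟨X', hX'X, hfin, hle⟩ := hx X hX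
  lift X' to Finset L using hfin
  exact ⟨X', hX'X, hle.trans_eq (Finset.sup_id_eq_sSup X').symm⟩

lemma IsCompactElt.widelyGenerated (hx : IsCompactElt x) : WidelyGenerated x := by
  intro y hy
  have := CompleteLattice.Iic_coatomic_of_compact_element hx.isCompactElement
  obtain htop | ⟨⟨m, _⟩, hm, hym⟩ := eq_top_or_exists_le_coatom (⟨y, hy.le⟩ : Set.Iic x)
  · exact absurd (congrArg Subtype.val htop) hy.ne
  · exact ⟨m, Set.Iic.isCoatom_iff.1 hm, hym⟩

lemma finitelyGeneratedElt_iff_exists_classMin_eq :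
    FinitelyGeneratedElt x ↔ ∃ r, IsCofiniteCongruence r ∧ classMin r x = x := by
  refine exists_congr fun r => and_congr_right fun hr => ⟨fun hmin => ?_, fun hx y hxy => ?_⟩
  · exact (hr.1.classMin_le x).antisymm (le_sInf hmin)
  · exact hx.symm.trans_le (sInf_le hxy)

lemma IsCofiniteCongruence.finitelyGeneratedElt_classMin (hr : IsCofiniteCongruence r) (x : L) :
    FinitelyGeneratedElt (classMin r x) :=
  finitelyGeneratedElt_iff_exists_classMin_eq.2 ⟨r, hr, hr.1.classMin_classMin x⟩

namespace FinitelyGeneratedElt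

lemma sup (hx : FinitelyGeneratedElt x) (hy : FinitelyGeneratedElt y) :
    FinitelyGeneratedElt (x ⊔ y) := by
  rw [finitelyGeneratedElt_iff_exists_classMin_eq] at hx hy
  obtain ⟨r, hr, hx⟩ := hx
  obtain ⟨s, hs, hy⟩ := hy
  refine ⟨_, hr.and hs, fun z hz => sup_le ?_ ?_⟩
  · exact hx ▸ hr.1.classMin_le_of_le_of_rel le_sup_left hz.1
  · exact hy ▸ hs.1.classMin_le_of_le_of_rel le_sup_right hz.2

lemma sSup_of_finite {S : Set L} (hS : S.Finite) (h : ∀ z ∈ S, FinitelyGeneratedElt z) :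
    FinitelyGeneratedElt (sSup S) := by
  induction S, hS using Set.Finite.induction_on with
  | empty =>
    rw [sSup_empty]
    exact ⟨_, isCofiniteCongruence_true, fun _ _ => bot_le⟩
  | insert _ _ ih =>
    rw [Set.forall_mem_insert] at h
    rw [sSup_insert]
    exact h.1.sup (ih h.2)

lemma isCompactElt (hx : FinitelyGeneratedElt x) : IsCompactElt x := by
  intro X hX
  obtain ⟨r, hr, hx⟩ := finitelyGeneratedElt_iff_exists_classMin_eq.1 hx
  have hfin : (classMin r '' X).Finite :=
    hr.2.finite_range_classMin.subset (Set.image_subset_range _ _)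
  obtain ⟨X', hX'X, hX'fin, hX'⟩ := hfin.exists_subset_finite_image_eq subset_rfl
  refine ⟨X', hX'X, hX'fin, ?_⟩
  calc x = classMin r x := hx.symm
    _ ≤ sSup (classMin r '' X) := hr.1.classMin_le_sSup_image_classMin hX
    _ = sSup (classMin r '' X') := by rw [hX']
    _ ≤ sSup X' := sSup_le (Set.forall_mem_image.2 fun u hu =>
      (hr.1.classMin_le u).trans (le_sSup hu))

lemma finite_lowerCovers (hx : FinitelyGeneratedElt x) : {y | y ⋖ x}.Finite := by
  obtain ⟨r, hr, hx⟩ := finitelyGeneratedElt_iff_exists_classMin_eq.1 hx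
  exact hr.2.finite_range_classMin.of_injOn (fun y _ => Set.mem_range_self y)
    (hr.1.injOn_classMin_lowerCovers hx)

lemma exists_finite_completeJoinIrred_sSup_eq (hx : FinitelyGeneratedElt x) :
    ∃ S : Set L, S.Finite ∧ (∀ j ∈ S, CompleteJoinIrred j) ∧ sSup S = x := by
  obtain ⟨r, hr, hx⟩ := finitelyGeneratedElt_iff_exists_classMin_eq.1 hx
  refine ⟨{j | classMin r j = j ∧ CompleteJoinIrred j ∧ j ≤ x}, ?_, fun j hj => hj.2.1, ?_⟩
  · exact hr.2.finite_range_classMin.subset fun j hj => ⟨j, hj.1⟩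
  · refine (sSup_le fun j hj => hj.2.2).antisymm ?_
    exact hr.le_of_forall_completeJoinIrred_le hx fun j hj hirr hjx => le_sSup ⟨hj, hirr, hjx⟩

end FinitelyGeneratedElt

namespace IsProfinite

lemma exists_finitelyGeneratedElt_le_not_le (hL : IsProfinite L) (hxy : ¬ x ≤ y) :
    ∃ z, FinitelyGeneratedElt z ∧ z ≤ x ∧ ¬ z ≤ y := by
  obtain ⟨r, hr, hsep⟩ := hL x (x ⊓ y) fun h => hxy (inf_eq_left.1 h.symm)
  refine ⟨classMin r x, hr.finitelyGeneratedElt_classMin x, hr.1.classMin_le x, fun hle => hsep ?_⟩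
  have hinf : r (x ⊓ y) (classMin r x) := by
    simpa only [inf_of_le_left hle] using hr.1.rel_inf (hr.1.rel_classMin x) (hr.1.1.refl y)
  exact hr.1.1.trans (hr.1.rel_classMin x) (hr.1.1.symm hinf)

lemma le_sSup_finitelyGeneratedElt (hL : IsProfinite L) (x : L) :
    x ≤ sSup {z | FinitelyGeneratedElt z ∧ z ≤ x} := by
  by_contra hnot
  obtain ⟨z, hz, hzx, hznot⟩ := hL.exists_finitelyGeneratedElt_le_not_le hnot
  exact hznot (le_sSup ⟨hz, hzx⟩)

lemma finitelyGeneratedElt_of_isCompactElt (hL : IsProfinite L) (hx : IsCompactElt x) :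
    FinitelyGeneratedElt x := by
  obtain ⟨S, hS, hSfin, hle⟩ := hx _ (hL.le_sSup_finitelyGeneratedElt x)
  obtain rfl : sSup S = x := (sSup_le fun z hz => (hS hz).2).antisymm hle
  exact .sSup_of_finite hSfin fun z hz => (hS hz).1

lemma finitelyGeneratedElt_of_completeJoinIrred (hL : IsProfinite L) (hx : CompleteJoinIrred x) :
    FinitelyGeneratedElt x := by
  have hlt := completeJoinIrred_iff_sSup_Iio_lt.1 hx
  obtain ⟨z, hz, hzx, hznot⟩ := hL.exists_finitelyGeneratedElt_le_not_le hlt.not_ge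
  obtain rfl : z = x := hzx.eq_of_not_lt fun h => hznot (le_sSup h)
  exact hz

lemma finitelyGeneratedElt_of_widelyGenerated (hL : IsProfinite L) (hx : WidelyGenerated x)
    (hfin : {y | y ⋖ x}.Finite) : FinitelyGeneratedElt x := by
  choose! z hz hzx hznot using fun y (hy : y ⋖ x) =>
    hL.exists_finitelyGeneratedElt_le_not_le hy.lt.not_ge
  have hle : sSup (z '' {y | y ⋖ x}) ≤ x := sSup_le (Set.forall_mem_image.2 hzx)
  have heq : sSup (z '' {y | y ⋖ x}) = x := hle.eq_of_not_lt fun hlt => by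
    obtain ⟨y, hy, hley⟩ := hx _ hlt
    exact hznot y hy ((le_sSup (Set.mem_image_of_mem z hy)).trans hley)
  rw [← heq]
  exact .sSup_of_finite (hfin.image z) (Set.forall_mem_image.2 hz)

theorem isCompactElt_iff_finitelyGeneratedElt (hL : IsProfinite L) :
    IsCompactElt x ↔ FinitelyGeneratedElt x :=
  ⟨hL.finitelyGeneratedElt_of_isCompactElt, FinitelyGeneratedElt.isCompactElt⟩

theorem finitelyGeneratedElt_iff_widelyGenerated_and_finite_lowerCovers
    (hL : IsProfinite L) :
    FinitelyGeneratedElt x ↔ WidelyGenerated x ∧ {y | y ⋖ x}.Finite :=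
  ⟨fun hx => ⟨hx.isCompactElt.widelyGenerated, hx.finite_lowerCovers⟩,
    fun hx => hL.finitelyGeneratedElt_of_widelyGenerated hx.1 hx.2⟩

theorem finitelyGeneratedElt_iff_exists_finite_completeJoinIrred_sSup_eq
    (hL : IsProfinite L) :
    FinitelyGeneratedElt x ↔
      ∃ S : Set L, S.Finite ∧ (∀ j ∈ S, CompleteJoinIrred j) ∧ sSup S = x := by
  refine ⟨FinitelyGeneratedElt.exists_finite_completeJoinIrred_sSup_eq, ?_⟩
  rintro ⟨S, hS, hirr, rfl⟩
  exact .sSup_of_finite hS fun j hj => hL.finitelyGeneratedElt_of_completeJoinIrred (hirr j hj)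

end IsProfinite

end

/-- In a profinite complete lattice, the following are equivalent for
an element `x`: (i) `x` is compact; (ii) `x` is finitely generated; (iii) `x` is widely
generated and covers only finitely many elements; (iv) `x` is the join of a finite set of
complete join-irreducibles. -/
theorem extended_weak_order_stmt12 {L : Type*} [CompleteLattice L]
    (hL : IsProfinite L) (x : L) :
    (IsCompactElt x ↔ FinitelyGeneratedElt x) ∧
    (IsCompactElt x ↔ (WidelyGenerated x ∧ {y : L | y ⋖ x}.Finite)) ∧
    (IsCompactElt x ↔
      ∃ S : Set L, S.Finite ∧ (∀ j ∈ S, CompleteJoinIrred j) ∧ sSup S = x) := by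
  have hfg := hL.isCompactElt_iff_finitelyGeneratedElt (x := x)
  exact ⟨hfg,
    hfg.trans hL.finitelyGeneratedElt_iff_widelyGenerated_and_finite_lowerCovers,
    hfg.trans hL.finitelyGeneratedElt_iff_exists_finite_completeJoinIrred_sSup_eq⟩
end

section
/- Let L be a complete lattice and x ∈ L. Then x has a canonical join representation if and only if x is widely generated and, for each cover y ⋖ x, the set {z ∈ L : z ∨ y = x} has a minimum element j_y (i.e., an element of the set below all other elements of the set). In that case, the canonical join representation of x is x = ⋁_{y ⋖ x} j_y. -/
theorem isAntichain_setOf_covBy {α : Type*} [PartialOrder α] (x : α) :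
    IsAntichain (· ≤ ·) {y | y ⋖ x} :=
  fun _ hy _ hz hne hle => hne ((hy.eq_or_eq hle hz.le).resolve_right hz.ne).symm

section SemilatticeSup

variable {α : Type*} [SemilatticeSup α] {u w x z : α}

theorem sup_eq_iff_of_covBy (hw : w ⋖ x) : z ⊔ w = x ↔ z ≤ x ∧ ¬ z ≤ w := by
  constructor
  · rintro rfl
    exact ⟨le_sup_left, fun hzw => hw.ne (sup_eq_right.2 hzw).symm⟩
  · rintro ⟨hzx, hzw⟩
    exact (hw.eq_or_eq le_sup_right (sup_le hzx hw.le)).resolve_left fun h =>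
      hzw (sup_eq_right.1 h)

theorem isGreatest_sdiff_Ici_of_covBy (hw : w ⋖ x) (hu : IsLeast {z | z ⊔ w = x} u) :
    IsGreatest (Set.Iic x \ Set.Ici u) w := by
  refine ⟨⟨hw.le, ((sup_eq_iff_of_covBy hw).1 hu.1).2⟩, fun z ⟨hzx, huz⟩ => ?_⟩
  by_contra hzw
  exact huz (hu.2 ((sup_eq_iff_of_covBy hw).2 ⟨hzx, hzw⟩))

theorem covBy_of_isGreatest_sdiff_Ici (hw : IsGreatest (Set.Iic x \ Set.Ici u) w)
    (huw : u ⊔ w = x) : w ⋖ x := by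
  obtain ⟨⟨hwx, hnot⟩, hmax⟩ := hw
  refine ⟨lt_of_le_of_ne hwx fun h => hnot (sup_eq_right.1 (huw.trans h.symm)), fun z hwz hzx => ?_⟩
  have huz : u ≤ z := by
    by_contra huz
    exact hwz.not_ge (hmax ⟨hzx.le, huz⟩)
  exact hzx.not_ge (huw ▸ sup_le huz hwz.le)

theorem isLeast_of_isGreatest_sdiff_Ici (hw : IsGreatest (Set.Iic x \ Set.Ici u) w)
    (huw : u ⊔ w = x) : IsLeast {z | z ⊔ w = x} u := by
  have hcov : w ⋖ x := covBy_of_isGreatest_sdiff_Ici hw huw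
  refine ⟨huw, fun z hz => ?_⟩
  obtain ⟨hzx, hzw⟩ := (sup_eq_iff_of_covBy hcov).1 hz
  by_contra huz
  exact hzw (hw.2 ⟨hzx, huz⟩)

/-- The set of the elements `j_y = min {z | z ⊔ y = x}`, where `y` runs over the lower covers of `x`
for which this minimum exists. It is the candidate canonical join representation of `x`. -/
def lowerCoverJoinands (x : α) : Set α :=
  {j | ∃ y, y ⋖ x ∧ IsLeast {z | z ⊔ y = x} j}

theorem isAntichain_lowerCoverJoinands (x : α) : IsAntichain (· ≤ ·) (lowerCoverJoinands x) := by
  rintro j ⟨y, hy, hj⟩ j' ⟨y', hy', hj'⟩ hne hle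
  have hyj' : ¬ j' ≤ y := fun h => (isGreatest_sdiff_Ici_of_covBy hy hj).1.2 (hle.trans h)
  have hyy' : y ≤ y' := (isGreatest_sdiff_Ici_of_covBy hy' hj').2 ⟨hy.le, hyj'⟩
  obtain rfl : y = y' := (isAntichain_setOf_covBy x).eq hy hy' hyy'
  exact hne (hj.unique hj')

end SemilatticeSup

section CompleteLattice

variable {L : Type*} [CompleteLattice L] {U V : Set L} {a b u x y : L}

theorem exists_mem_not_le_of_lt_sSup_s17 (h : y < sSup V) : ∃ v ∈ V, ¬ v ≤ y := by
  by_contra! hV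
  exact h.not_ge (sSup_le hV)

theorem sSup_sdiff_singleton_of_le_s17 (hb : b ∈ U) (hne : a ≠ b) (hab : a ≤ b) :
    sSup (U \ {a}) = sSup U := by
  refine le_antisymm (sSup_le_sSup Set.sdiff_subset) (sSup_le_sSup_of_isCofinalFor fun c hc => ?_)
  obtain rfl | hca := eq_or_ne c a
  · exact ⟨b, ⟨hb, hne.symm⟩, hab⟩
  · exact ⟨c, ⟨hc, hca⟩, le_rfl⟩

theorem isCanonicalJoinRep_iff_isAntichain :
    IsCanonicalJoinRep U x ↔
      sSup U = x ∧ IsAntichain (· ≤ ·) U ∧ ∀ V, sSup V = x → IsCofinalFor U V := by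
  constructor
  · rintro ⟨hsup, hirr, hcan⟩
    refine ⟨hsup, fun a ha b hb hne hab => ?_, hcan⟩
    exact hirr (U \ {a}) (Set.sdiff_singleton_ssubset.2 ha)
      ((sSup_sdiff_singleton_of_le_s17 hb hne hab).trans hsup)
  · rintro ⟨hsup, hanti, hcan⟩
    refine ⟨hsup, fun U' hU' hsup' => hU'.2 fun u hu => ?_, hcan⟩
    obtain ⟨v, hv, huv⟩ := hcan U' hsup' hu
    rwa [hanti.eq hu (hU'.1 hv) huv]

theorem IsCanonicalJoinRep.exists_isGreatest_sdiff_Ici (hU : IsCanonicalJoinRep U x) (hu : u ∈ U) :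
    ∃ w, IsGreatest (Set.Iic x \ Set.Ici u) w ∧ u ⊔ w = x := by
  obtain ⟨hsup, hanti, hcan⟩ := isCanonicalJoinRep_iff_isAntichain.1 hU
  have hUx : ∀ v ∈ U, v ≤ x := fun v hv => hsup ▸ le_sSup hv
  set w := sSup (Set.Iic x \ Set.Ici u) with hw
  have hwx : w ≤ x := sSup_le fun z hz => hz.1
  have hxuw : x ≤ u ⊔ w := by
    refine hsup.symm.le.trans (sSup_le fun v hv => ?_)
    obtain rfl | hvu := eq_or_ne v u
    · exact le_sup_left
    · exact le_sup_of_le_right (le_sSup ⟨hUx v hv, hanti hu hv hvu.symm⟩)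
  have huw : u ⊔ w = x := (sup_le (hUx u hu) hwx).antisymm hxuw
  have hnot : ¬ u ≤ w := fun h => by
    obtain ⟨z, hz, huz⟩ := hcan _ (hw.symm.trans ((sup_eq_right.2 h).symm.trans huw)) hu
    exact hz.2 huz
  exact ⟨w, ⟨⟨hwx, hnot⟩, fun z hz => le_sSup hz⟩, huw⟩

theorem IsCanonicalJoinRep.exists_covBy_isLeast (hU : IsCanonicalJoinRep U x) (hy : y < x) :
    ∃ w, w ⋖ x ∧ y ≤ w ∧ ∃ u, IsLeast {z | z ⊔ w = x} u := by
  obtain ⟨u, hu, huy⟩ := exists_mem_not_le_of_lt_sSup_s17 (hU.1 ▸ hy)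
  obtain ⟨w, hw, huw⟩ := hU.exists_isGreatest_sdiff_Ici hu
  exact ⟨w, covBy_of_isGreatest_sdiff_Ici hw huw, hw.2 ⟨hy.le, huy⟩, u,
    isLeast_of_isGreatest_sdiff_Ici hw huw⟩

theorem IsCanonicalJoinRep.widelyGenerated_s17 (hU : IsCanonicalJoinRep U x) : WidelyGenerated x := by
  intro y hy
  obtain ⟨w, hw, hyw, -⟩ := hU.exists_covBy_isLeast hy
  exact ⟨w, hw, hyw⟩

theorem IsCanonicalJoinRep.exists_isLeast (hU : IsCanonicalJoinRep U x) (hy : y ⋖ x) :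
    ∃ j, IsLeast {z | z ⊔ y = x} j := by
  obtain ⟨w, hw, hyw, hj⟩ := hU.exists_covBy_isLeast hy.lt
  obtain rfl : y = w := (isAntichain_setOf_covBy x).eq hy hw hyw
  exact hj

theorem WidelyGenerated.sSup_lowerCoverJoinands (hx : WidelyGenerated x)
    (hmin : ∀ y, y ⋖ x → ∃ j, IsLeast {z | z ⊔ y = x} j) : sSup (lowerCoverJoinands x) = x := by
  have hle : sSup (lowerCoverJoinands x) ≤ x := by
    refine sSup_le ?_
    rintro j ⟨y, -, hj⟩
    exact le_sup_left.trans_eq hj.1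
  by_contra hne
  obtain ⟨y, hy, hley⟩ := hx _ (lt_of_le_of_ne hle hne)
  obtain ⟨j, hj⟩ := hmin y hy
  have hmem : j ∈ lowerCoverJoinands x := ⟨y, hy, hj⟩
  have hjy : j ≤ y := (le_sSup hmem).trans hley
  exact ((sup_eq_iff_of_covBy hy).1 hj.1).2 hjy

theorem isCofinalFor_lowerCoverJoinands_of_sSup_eq (hV : sSup V = x) :
    IsCofinalFor (lowerCoverJoinands x) V := by
  rintro j ⟨y, hy, hj⟩
  obtain ⟨v, hv, hvy⟩ := exists_mem_not_le_of_lt_sSup_s17 (hV ▸ hy.lt)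
  exact ⟨v, hv, hj.2 ((sup_eq_iff_of_covBy hy).2 ⟨hV ▸ le_sSup hv, hvy⟩)⟩

theorem WidelyGenerated.isCanonicalJoinRep_lowerCoverJoinands (hx : WidelyGenerated x)
    (hmin : ∀ y, y ⋖ x → ∃ j, IsLeast {z | z ⊔ y = x} j) :
    IsCanonicalJoinRep (lowerCoverJoinands x) x :=
  isCanonicalJoinRep_iff_isAntichain.2 ⟨hx.sSup_lowerCoverJoinands hmin,
    isAntichain_lowerCoverJoinands x, fun _ => isCofinalFor_lowerCoverJoinands_of_sSup_eq⟩

end CompleteLattice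

/-- In a complete lattice, `x` has a canonical join representation if
and only if `x` is widely generated and, for each cover `y ⋖ x`, the set
`{z : z ∨ y = x}` has a minimum element `j_y`. In that case the canonical join
representation is `x = ⋁_{y ⋖ x} j_y`. -/
theorem extended_weak_order_stmt17 {L : Type*} [CompleteLattice L] (x : L) :
    ((∃ U : Set L, IsCanonicalJoinRep U x) ↔
      (WidelyGenerated x ∧
        ∀ y : L, y ⋖ x → ∃ j : L, IsLeast {z : L | z ⊔ y = x} j)) ∧
    ((WidelyGenerated x ∧
        ∀ y : L, y ⋖ x → ∃ j : L, IsLeast {z : L | z ⊔ y = x} j) →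
      IsCanonicalJoinRep
        {j : L | ∃ y : L, y ⋖ x ∧ IsLeast {z : L | z ⊔ y = x} j} x) := by
  refine ⟨⟨?_, fun ⟨hx, hmin⟩ => ⟨_, hx.isCanonicalJoinRep_lowerCoverJoinands hmin⟩⟩,
    fun ⟨hx, hmin⟩ => hx.isCanonicalJoinRep_lowerCoverJoinands hmin⟩
  rintro ⟨U, hU⟩
  exact ⟨hU.widelyGenerated_s17, fun y hy => hU.exists_isLeast hy⟩
end
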